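/- arXiv:quant-ph/0610153 — 5 statements merged into one kernel-verified Lean document; each statement's English description precedes it below -/
import Mathlib

section
/- Let C1 and C2 be F_q-linear codes of length n over F_q and let C = C1 × C2 = {(a|b) : a ∈ C1, b ∈ C2} ⊆ F_q^{2n}. Then D := C ∩ C^{⊥s} = (C1 ∩ C2^⊥) × (C2 ∩ C1^⊥), and D^{⊥s} = (C2 ∩ C1^⊥)^⊥ × (C1 ∩ C2^⊥)^⊥. -/
/-!
The trace form `(x, y) ↦ Tr(x y)` of the separable extension `F / F_p` is nondegenerate. Hence
`x = 0` as soon as `Tr(c x) = 0` for all `c : F`, so for sets `A`, `B`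
containing `0` and closed under scaling, the trace-symplectic dual of `A × B` is the Euclidean one
with the factors exchanged: `(A × B)^{⊥s} = B^⊥ × A^⊥` (`sdual_prod`). Both claims follow by
applying this to `C1 × C2` and then to `(C1 ∩ C2^⊥) × (C2 ∩ C1^⊥)`.
-/

open scoped Pointwise

noncomputable section

/-- `F_q^{2n}`: pairs `(a|b)` with `a, b ∈ F_q^n`. -/
abbrev Pairs (F : Type) (n : ℕ) := (Fin n → F) × (Fin n → F)

/-- Symplectic weight: the number of coordinates `i` with `(a_i, b_i) ≠ (0,0)`. -/
def swt {F : Type} [Zero F] {n : ℕ} (u : Pairs F n) : ℕ :=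
  Nat.card {i : Fin n // (u.1 i, u.2 i) ≠ (0, 0)}

/-- Trace-symplectic form: `⟨(a|b)|(a'|b')⟩ₛ = Tr_{q/p}(a'·b − a·b')`. -/
def sform (p : ℕ) {F : Type} [Field F] [Algebra (ZMod p) F] {n : ℕ}
    (u v : Pairs F n) : ZMod p :=
  Algebra.trace (ZMod p) F (∑ i, (v.1 i * u.2 i - u.1 i * v.2 i))

/-- Trace-symplectic dual of a set `S ⊆ F_q^{2n}`. -/
def sdual (p : ℕ) {F : Type} [Field F] [Algebra (ZMod p) F] {n : ℕ}
    (S : Set (Pairs F n)) : Set (Pairs F n) :=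
  {v | ∀ w ∈ S, sform p v w = 0}


/-- Euclidean dual of a set `S ⊆ F_q^n` (with respect to the dot product). -/
def edual {F : Type} [Field F] {n : ℕ} (S : Set (Fin n → F)) : Set (Fin n → F) :=
  {x | ∀ y ∈ S, ∑ i, x i * y i = 0}

theorem eq_zero_of_trace_mul {p : ℕ} (hp : p.Prime) {F : Type} [Field F] [Fintype F]
    [Algebra (ZMod p) F] {x : F} (h : ∀ c : F, Algebra.trace (ZMod p) F (c * x) = 0) : x = 0 := by
  have : Fact p.Prime := ⟨hp⟩
  have hnd := traceForm_nondegenerate (ZMod p) F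
  refine hnd.2 x fun c => ?_
  simpa [Algebra.traceForm_apply] using h c

/-- The trace-symplectic dual of a product of scaling-closed sets is the product of the Euclidean
duals, with the factors exchanged. -/
theorem sdual_prod {p n : ℕ} (hp : p.Prime) {F : Type} [Field F] [Fintype F]
    [Algebra (ZMod p) F] {A B : Set (Fin n → F)} (hA0 : 0 ∈ A) (hB0 : 0 ∈ B)
    (hA : ∀ (c : F), ∀ x ∈ A, c • x ∈ A) (hB : ∀ (c : F), ∀ x ∈ B, c • x ∈ B) :
    sdual p (A ×ˢ B) = edual B ×ˢ edual A := by
  ext ⟨a, b⟩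
  constructor
  · intro h
    refine ⟨fun y hy => ?_, fun y hy => ?_⟩
    · -- Test against `(0 | -c y)`, which turns the form into `Tr(c (a · y))`.
      refine eq_zero_of_trace_mul hp fun c => ?_
      have := h (0, (-c) • y) ⟨hA0, hB _ _ hy⟩
      rw [← this, sform, Finset.mul_sum]
      congr 1
      refine Finset.sum_congr rfl fun i _ => ?_
      simp only [Pi.zero_apply, Pi.smul_apply, smul_eq_mul]
      ring
    · refine eq_zero_of_trace_mul hp fun c => ?_
      have := h (c • y, 0) ⟨hA _ _ hy, hB0⟩
      rw [← this, sform, Finset.mul_sum]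
      congr 1
      refine Finset.sum_congr rfl fun i _ => ?_
      simp only [Pi.zero_apply, Pi.smul_apply, smul_eq_mul]
      ring
  · rintro ⟨ha, hb⟩ ⟨x, y⟩ ⟨hx, hy⟩
    have h1 : ∑ i, a i * y i = 0 := ha y hy
    have h2 : ∑ i, x i * b i = 0 := by
      simpa only [mul_comm] using hb x hx
    simp only [sform, Finset.sum_sub_distrib, h1, h2, sub_zero, map_zero]

theorem zero_mem_edual {n : ℕ} {F : Type} [Field F] (S : Set (Fin n → F)) : 0 ∈ edual S :=
  fun y _ => by simp

theorem smul_mem_edual {n : ℕ} {F : Type} [Field F] (S : Set (Fin n → F)) (c : F) (x : Fin n → F)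
    (hx : x ∈ edual S) : c • x ∈ edual S := fun y hy => by
  have h : ∑ i, x i * y i = 0 := hx y hy
  simp only [Pi.smul_apply, smul_eq_mul, mul_assoc, ← Finset.mul_sum, h, mul_zero]

/-- for `F_q`-linear codes `C1, C2` and `C = C1 × C2 ⊆ F_q^{2n}`, one has
`D := C ∩ C^{⊥s} = (C1 ∩ C2^⊥) × (C2 ∩ C1^⊥)` and
`D^{⊥s} = (C2 ∩ C1^⊥)^⊥ × (C1 ∩ C2^⊥)^⊥`. -/
theorem prod_inter_sdual (p n : ℕ) (hp : p.Prime) (F : Type) [Field F] [Fintype F]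
    [CharP F p] [Algebra (ZMod p) F] (C1 C2 : Submodule F (Fin n → F)) :
    ((C1 : Set (Fin n → F)) ×ˢ (C2 : Set (Fin n → F))) ∩
        sdual p ((C1 : Set (Fin n → F)) ×ˢ (C2 : Set (Fin n → F))) =
      ((C1 : Set (Fin n → F)) ∩ edual (C2 : Set (Fin n → F))) ×ˢ
        ((C2 : Set (Fin n → F)) ∩ edual (C1 : Set (Fin n → F))) ∧
    sdual p (((C1 : Set (Fin n → F)) ×ˢ (C2 : Set (Fin n → F))) ∩
        sdual p ((C1 : Set (Fin n → F)) ×ˢ (C2 : Set (Fin n → F)))) =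
      (edual ((C2 : Set (Fin n → F)) ∩ edual (C1 : Set (Fin n → F)))) ×ˢ
        (edual ((C1 : Set (Fin n → F)) ∩ edual (C2 : Set (Fin n → F)))) := by
  have h1 : ((C1 : Set (Fin n → F)) ×ˢ (C2 : Set (Fin n → F))) ∩
        sdual p ((C1 : Set (Fin n → F)) ×ˢ (C2 : Set (Fin n → F))) =
      ((C1 : Set (Fin n → F)) ∩ edual (C2 : Set (Fin n → F))) ×ˢ
        ((C2 : Set (Fin n → F)) ∩ edual (C1 : Set (Fin n → F))) := by
    rw [sdual_prod hp C1.zero_mem C2.zero_mem (fun c _ h => C1.smul_mem c h)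
      (fun c _ h => C2.smul_mem c h), Set.prod_inter_prod]
  refine ⟨h1, ?_⟩
  rw [h1]
  exact sdual_prod hp ⟨C1.zero_mem, zero_mem_edual _⟩ ⟨C2.zero_mem, zero_mem_edual _⟩
    (fun c x h => ⟨C1.smul_mem c h.1, smul_mem_edual _ c x h.2⟩)
    (fun c x h => ⟨C2.smul_mem c h.1, smul_mem_edual _ c x h.2⟩)
end
end

section
/- Let X ⊆ F_q^{2n} be a nonzero F_p-linear additive code with Y = X ∩ X^{⊥s}, and suppose Y^{⊥s} \ X is nonempty with d = swt(Y^{⊥s} \ X). If the code is pure, that is, every nonzero element of X has symplectic weight at least d, then swt(Y^{⊥s} \ Y) = swt(Y^{⊥s}) = d. (In particular, a pure ((n,K,R,d))_q Clifford subsystem code yields a pure ((n,KR,d))_q stabilizer code.) -/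
/-!
A word of weight `d` in `Y^{⊥s} \ X` also lies in `Y^{⊥s} \ Y` and in `Y^{⊥s} \ {0}`, because
`{0} ⊆ Y ⊆ X`. Conversely, a nonzero word of `Y^{⊥s}` has weight at least `d`: inside `X` by
purity, outside `X` by the definition of `d`. Both minima are therefore instances of one fact
about `Y^{⊥s} \ T` with `0 ∈ T ⊆ X`.
-/

open scoped Pointwise

noncomputable section

/-- for a nonzero additive code `X` with `Y = X ∩ X^{⊥s}`, `Y^{⊥s} \ X`
nonempty, and `d = swt(Y^{⊥s} \ X)`, if the code is pure (every nonzero element of `X` has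
symplectic weight at least `d`), then `swt(Y^{⊥s} \ Y) = swt(Y^{⊥s}) = d`
(the minimum weight of the code `Y^{⊥s}` being over its nonzero elements). -/
theorem pure_subsystem_to_stabilizer (p n d : ℕ) (hp : p.Prime) (F : Type) [Field F]
    [Fintype F] [CharP F p] [Algebra (ZMod p) F]
    (X : Submodule (ZMod p) (Pairs F n)) (hX0 : X ≠ ⊥)
    (Y : Set (Pairs F n)) (hY : Y = (X : Set (Pairs F n)) ∩ sdual p (X : Set (Pairs F n)))
    (hne : (sdual p Y \ (X : Set (Pairs F n))).Nonempty)
    (hd : d = sInf (swt '' (sdual p Y \ (X : Set (Pairs F n)))))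
    (hpure : ∀ v ∈ X, v ≠ 0 → d ≤ swt v) :
    sInf (swt '' (sdual p Y \ Y)) = d ∧
    sInf (swt '' (sdual p Y \ {0})) = d := by
  have key : ∀ T : Set (Pairs F n), 0 ∈ T → T ⊆ X → sInf (swt '' (sdual p Y \ T)) = d := by
    intro T h0 hT
    obtain ⟨w, ⟨hwY, hwX⟩, hw⟩ := Nat.sInf_mem (hne.image swt)
    refine IsLeast.csInf_eq ⟨⟨w, ⟨hwY, fun h => hwX (hT h)⟩, hw.trans hd.symm⟩, ?_⟩
    rintro _ ⟨v, ⟨hvY, hvT⟩, rfl⟩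
    by_cases hv : v ∈ X
    · exact hpure v hv fun h => hvT (h ▸ h0)
    · exact hd.le.trans (Nat.sInf_le ⟨v, ⟨hvY, hv⟩, rfl⟩)
  have h0Y : (0 : Pairs F n) ∈ Y := by
    rw [hY]
    exact ⟨X.zero_mem, fun w _ => by simp [sform]⟩
  refine ⟨key Y h0Y (hY ▸ Set.inter_subset_left), key {0} rfl ?_⟩
  exact Set.singleton_subset_iff.mpr X.zero_mem
end
end

section
/- (Singleton-type bound for pure subsystem codes.) Let X ⊆ F_q^{2n} be a nonzero F_p-linear additive code with Y = X ∩ X^{⊥s}, |X||Y| < q^{2n}, and suppose Y^{⊥s} \ X is nonempty with d = swt(Y^{⊥s} \ X). If every nonzero element of X has symplectic weight at least d (purity), then q^n/|Y| ≤ q^{n−2d+2}, equivalently |Y| ≥ q^{2d−2}. (In subsystem code language: every pure ((n,K,R,d))_q Clifford subsystem code with K > 1 satisfies KR ≤ q^{n−2d+2}; for an [[n,k,r,d]]_q code, k + r ≤ n − 2d + 2.) -/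
open scoped Pointwise

noncomputable section

/-!
Put `k = d - 1` and let `W` be the space of the pairs `(a|b)` supported on the first `k` coordinates,
so that `|W| = q^{2(d-1)}`. Sending `v ∈ W` to the functional `⟨v|·⟩ₛ` on `Y` is a linear map
`W → Y*`, whose kernel consists of the elements of `Y^{⊥s}` supported on `k < d` coordinates.
Every nonzero element of `Y^{⊥s}` has weight at least `d`: by purity if it lies in `X`, and by the
definition of `d` otherwise. The map is thus injective and `q^{2(d-1)} ≤ |Y*| = |Y|`
(the classical Singleton bound for `Y^{⊥s}`, with nondegeneracy of the form never needed).
The steps are `card_le_of_separating` (counting functionals), `swt_padPairs_le` (weights in `W`) and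
`swt_le_length` (which gives `d ≤ n`, so that `W` makes sense).
-/

/-- The trace-symplectic form as a bilinear form over the prime field. -/
def sformBilin (p n : ℕ) [Fact p.Prime] (F : Type) [Field F] [Algebra (ZMod p) F] :
    Pairs F n →ₗ[ZMod p] Pairs F n →ₗ[ZMod p] ZMod p :=
  LinearMap.mk₂ (ZMod p) (sform p)
    (by
      intro u u' v
      simp only [sform, ← map_add, ← Finset.sum_add_distrib]
      congr 1
      refine Finset.sum_congr rfl fun i _ => ?_
      simp only [Prod.fst_add, Prod.snd_add, Pi.add_apply]
      ring)
    (by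
      intro c u v
      simp only [sform, ← map_smul, Finset.smul_sum]
      congr 1
      refine Finset.sum_congr rfl fun i _ => ?_
      simp [smul_sub])
    (by
      intro u v v'
      simp only [sform, ← map_add, ← Finset.sum_add_distrib]
      congr 1
      refine Finset.sum_congr rfl fun i _ => ?_
      simp only [Prod.fst_add, Prod.snd_add, Pi.add_apply]
      ring)
    (by
      intro c u v
      simp only [sform, ← map_smul, Finset.smul_sum]
      congr 1
      refine Finset.sum_congr rfl fun i _ => ?_
      simp [smul_sub])

@[simp] lemma sformBilin_apply (p n : ℕ) [Fact p.Prime] (F : Type) [Field F]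
    [Algebra (ZMod p) F] (u v : Pairs F n) : sformBilin p n F u v = sform p u v := rfl

/-- The radical `X ∩ X^{⊥s}` of an additive code `X`, as a subspace. -/
def radical (p n : ℕ) [Fact p.Prime] (F : Type) [Field F] [Algebra (ZMod p) F]
    (X : Submodule (ZMod p) (Pairs F n)) : Submodule (ZMod p) (Pairs F n) where
  carrier := (X : Set (Pairs F n)) ∩ sdual p (X : Set (Pairs F n))
  zero_mem' := ⟨X.zero_mem, fun w _ => by simp [← sformBilin_apply]⟩
  add_mem' := by
    rintro a b ⟨ha, ha'⟩ ⟨hb, hb'⟩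
    refine ⟨X.add_mem ha hb, fun w hw => ?_⟩
    have h1 := ha' w hw
    have h2 := hb' w hw
    rw [← sformBilin_apply] at *
    simp [h1, h2]
  smul_mem' := by
    rintro c a ⟨ha, ha'⟩
    refine ⟨X.smul_mem c ha, fun w hw => ?_⟩
    have h1 := ha' w hw
    rw [← sformBilin_apply] at *
    simp [h1]

/-- The vector of length `n` extending `f` by zeros (or truncating it, when `n < k`). -/
def padZero (R : Type) {F : Type} (k n : ℕ) [Semiring R] [AddCommMonoid F] [Module R F] :
    (Fin k → F) →ₗ[R] (Fin n → F) where
  toFun f i := if h : i.1 < k then f ⟨i.1, h⟩ else 0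
  map_add' f g := by
    ext i
    by_cases h : i.1 < k <;> simp [h]
  map_smul' c f := by
    ext i
    by_cases h : i.1 < k <;> simp [h]

lemma padZero_injective (R : Type) {F : Type} {k n : ℕ} [Semiring R] [AddCommMonoid F]
    [Module R F] (hk : k ≤ n) : Function.Injective (padZero R (F := F) k n) := by
  intro f g h
  ext i
  have := congrFun h ⟨i.1, i.2.trans_le hk⟩
  simpa [padZero] using this

/-- Both halves of a pair extended by zeros to length `n`. -/
def padPairs (R : Type) (F : Type) (k n : ℕ) [Semiring R] [AddCommMonoid F] [Module R F] :
    Pairs F k →ₗ[R] Pairs F n :=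
  (padZero R k n).prodMap (padZero R k n)

lemma padPairs_injective (R : Type) {F : Type} {k n : ℕ} [Semiring R] [AddCommMonoid F]
    [Module R F] (hk : k ≤ n) : Function.Injective (padPairs R F k n) :=
  (padZero_injective R hk).prodMap (padZero_injective R hk)

lemma swt_padPairs_le (R : Type) {F : Type} {k n : ℕ} [Semiring R] [AddCommMonoid F]
    [Module R F] (u : Pairs F k) : swt (padPairs R F k n u) ≤ k := by
  have hlt : ∀ i : {i : Fin n // ((padPairs R F k n u).1 i, (padPairs R F k n u).2 i) ≠ (0, 0)},
      i.1.1 < k := by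
    rintro ⟨i, hi⟩
    by_contra h
    apply hi
    simp [padPairs, padZero, h]
  have := Nat.card_le_card_of_injective (fun i => (⟨i.1.1, hlt i⟩ : Fin k)) (by
    intro i j h
    exact Subtype.ext (Fin.ext (by simpa using h)))
  simpa [swt] using this

lemma swt_le_length {F : Type} [Zero F] {n : ℕ} (u : Pairs F n) : swt u ≤ n := by
  simpa [swt] using Nat.card_le_card_of_injective
    (Subtype.val : {i : Fin n // (u.1 i, u.2 i) ≠ (0, 0)} → Fin n) Subtype.val_injective

/-- A finite space that embeds in the dual of a finite space `S` has at most `|S|` elements. -/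
lemma card_le_of_separating {K W S : Type} [Field K] [Finite K] [AddCommGroup W] [Module K W]
    [AddCommGroup S] [Module K S] [Finite S] (φ : W →ₗ[K] Module.Dual K S)
    (hφ : ∀ w, φ w = 0 → w = 0) : Nat.card W ≤ Nat.card S := by
  have e : Module.Dual K S ≃ₗ[K] S := LinearEquiv.ofFinrankEq _ _ Subspace.dual_finrank_eq
  exact Nat.card_le_card_of_injective (fun w => e (φ w))
    (e.injective.comp ((injective_iff_map_eq_zero φ).2 hφ))

/-- Singleton-type bound for pure subsystem codes: for a nonzero additive code
`X` with `Y = X ∩ X^{⊥s}`, `|X||Y| < q^{2n}` (i.e. `K > 1`), `Y^{⊥s} \ X` nonempty and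
`d = swt(Y^{⊥s} \ X)`, purity implies `q^n/|Y| ≤ q^{n−2d+2}`, equivalently
`|Y| ≥ q^{2d−2}` (stated multiplicatively as `q^{2d} ≤ |Y|·q²`). -/
theorem singleton_bound_pure (p n d : ℕ) (hp : p.Prime) (F : Type) [Field F]
    [Fintype F] [CharP F p] [Algebra (ZMod p) F]
    (X : Submodule (ZMod p) (Pairs F n)) (hX0 : X ≠ ⊥)
    (Y : Set (Pairs F n)) (hY : Y = (X : Set (Pairs F n)) ∩ sdual p (X : Set (Pairs F n)))
    (hcard : (X : Set (Pairs F n)).ncard * Y.ncard < Fintype.card F ^ (2 * n))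
    (hne : (sdual p Y \ (X : Set (Pairs F n))).Nonempty)
    (hd : d = sInf (swt '' (sdual p Y \ (X : Set (Pairs F n)))))
    (hpure : ∀ v ∈ X, v ≠ 0 → d ≤ swt v) :
    Fintype.card F ^ (2 * d) ≤ Y.ncard * Fintype.card F ^ 2 := by
  have : Fact p.Prime := ⟨hp⟩
  -- The weight of every nonzero element of `Y^{⊥s}` is at least `d`.
  have hmin : ∀ v ∈ sdual p Y, v ≠ 0 → d ≤ swt v := by
    intro v hv hv0
    by_cases hvX : v ∈ X
    · exact hpure v hvX hv0
    · rw [hd]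
      exact Nat.sInf_le ⟨v, ⟨hv, hvX⟩, rfl⟩
  have hYcard : Y.ncard = Nat.card (radical p n F X) := by
    rw [hY]
    rfl
  have hYpos : 0 < Y.ncard := hYcard ▸ Nat.card_pos
  have hq : 0 < Fintype.card F := Fintype.card_pos
  have hdn : d ≤ n := by
    obtain ⟨v, hv⟩ := hne
    rw [hd]
    exact (Nat.sInf_le (Set.mem_image_of_mem swt hv)).trans (swt_le_length v)
  -- `d = 0` is trivial; it has to be set aside for `d - 1` to make sense.
  rcases d with _ | k
  · rw [mul_zero, pow_zero]
    exact Nat.mul_pos hYpos (pow_pos hq 2)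
  have hle : Nat.card (Pairs F k) ≤ Nat.card (radical p n F X) := by
    refine card_le_of_separating (K := ZMod p)
      (((radical p n F X).dualRestrict ∘ₗ sformBilin p n F) ∘ₗ padPairs (ZMod p) F k n) ?_
    intro w hw
    by_contra hw0
    have hmem : padPairs (ZMod p) F k n w ∈ sdual p Y := by
      intro y hy
      rw [hY] at hy
      exact LinearMap.congr_fun hw (⟨y, hy⟩ : radical p n F X)
    have hne0 : padPairs (ZMod p) F k n w ≠ 0 := fun h =>
      hw0 (padPairs_injective (ZMod p) (Nat.le_of_succ_le hdn) (h.trans (map_zero _).symm))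
    have h1 := hmin _ hmem hne0
    have h2 := swt_padPairs_le (ZMod p) (n := n) w
    omega
  have hW : Nat.card (Pairs F k) = Fintype.card F ^ (2 * k) := by
    simp [Nat.card_eq_fintype_card, two_mul, pow_add]
  rw [hW, ← hYcard] at hle
  calc Fintype.card F ^ (2 * (k + 1)) = Fintype.card F ^ (2 * k) * Fintype.card F ^ 2 := by ring
    _ ≤ Y.ncard * Fintype.card F ^ 2 := Nat.mul_le_mul_right _ hle
end
end

section
/- (Exchanging information and gauge qudits in pure subsystem codes.) Let C ⊆ F_{q^2}^n be an F_{q^2}-linear code with D = C ∩ C^{⊥h}, suppose D^{⊥h} \ C is nonempty, and let d = wt(D^{⊥h} \ C). Suppose the code is pure, i.e., wt(D^{⊥h}) = d. Then C^{⊥h} ∩ (C^{⊥h})^{⊥h} = D, every element of D^{⊥h} \ C^{⊥h} has Hamming weight at least d, every nonzero element of C^{⊥h} has Hamming weight at least d, and q^n/√(|C^{⊥h}||D|) = √(|C|/|D|) while √(|C^{⊥h}|/|D|) = q^n/√(|C||D|). (In subsystem code language: if a pure ((n,K,R,d))_q Clifford subsystem code exists, then an ((n,R,K,≥d))_q Clifford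 subsystem code pure to d exists.) -/
/-!
Write `q = p ^ m`. Since `x ↦ x ^ q` is the involutive Frobenius automorphism of the field with
`q ^ 2` elements, the hermitian form is a reflexive form, and `x ∈ C^{⊥h}` says exactly that the
Frobenius image of `x` lies in the euclidean dual of `C`. Hence `|C^{⊥h}| · |C| = q ^ (2 n)` by the
dimension formula for the nondegenerate dot product; this gives both cardinality identities.
Applied to `C^{⊥h}` as well, it shows `|C^{⊥h ⊥h}| = |C|`, so the inclusion `C ⊆ C^{⊥h ⊥h}` is an
equality and `C^{⊥h} ∩ C^{⊥h ⊥h} = D`.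

For the weights, purity bounds below by `d` the weight of every nonzero vector of `D^{⊥h}`. This
covers `D^{⊥h} \ C^{⊥h}` because `0 ∈ C^{⊥h}`, and `C^{⊥h} \ {0}` because `D ⊆ C` gives
`C^{⊥h} ⊆ D^{⊥h}`.
-/

noncomputable section

/-- Hamming weight of a vector. -/
def hwt {E : Type} [Zero E] {n : ℕ} (x : Fin n → E) : ℕ :=
  Nat.card {i : Fin n // x i ≠ 0}

/-- Hermitian inner product on `F_{q²}^n`: `⟨x|y⟩ₕ = Σ xᵢ^q yᵢ`. -/
def hform (q : ℕ) {E : Type} [Field E] {n : ℕ} (x y : Fin n → E) : E :=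
  ∑ i, x i ^ q * y i

/-- Hermitian dual of a set `S ⊆ F_{q²}^n`. -/
def hdual (q : ℕ) {E : Type} [Field E] {n : ℕ} (S : Set (Fin n → E)) : Set (Fin n → E) :=
  {x | ∀ y ∈ S, hform q x y = 0}

lemma hdual_anti (q : ℕ) {E : Type} [Field E] {n : ℕ} {S T : Set (Fin n → E)} (h : S ⊆ T) :
    hdual q T ⊆ hdual q S :=
  fun _ hx y hy => hx y (h hy)

section HermitianDual

variable {p m q n : ℕ} {E : Type} [Field E] [Fintype E] [CharP E p]

lemma frob_add (hp : p.Prime) (hq : q = p ^ m) (x y : E) : (x + y) ^ q = x ^ q + y ^ q := by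
  have := Fact.mk hp
  subst hq
  exact add_pow_char_pow x y p m

lemma frob_frob (hE : Fintype.card E = q ^ 2) (x : E) : (x ^ q) ^ q = x := by
  rw [← pow_mul, ← sq, ← hE, FiniteField.pow_card]

/-- Hermitian symmetry of the form, with `x ↦ x ^ q` as conjugation. -/
lemma hform_conj (hp : p.Prime) (hq : q = p ^ m) (hE : Fintype.card E = q ^ 2)
    (x y : Fin n → E) : hform q x y ^ q = hform q y x := by
  have := Fact.mk hp
  unfold hform
  subst hq
  rw [sum_pow_char_pow]
  refine Finset.sum_congr rfl fun i _ => ?_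
  rw [mul_pow, frob_frob hE, mul_comm]

/-- The hermitian dual of any set, as a linear subspace. -/
def hdualSubmodule (hp : p.Prime) (hq : q = p ^ m) (S : Set (Fin n → E)) :
    Submodule E (Fin n → E) where
  carrier := hdual q S
  zero_mem' := by
    have hq0 : q ≠ 0 := by rw [hq]; exact pow_ne_zero _ hp.ne_zero
    intro y _
    simp [hform, hq0]
  add_mem' := by
    intro a b ha hb y hy
    have h1 := ha y hy
    have h2 := hb y hy
    unfold hform at *
    simp only [Pi.add_apply, frob_add hp hq, add_mul, Finset.sum_add_distrib, h1, h2, add_zero]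
  smul_mem' := by
    intro c a ha y hy
    have h1 := ha y hy
    unfold hform at *
    simp only [Pi.smul_apply, smul_eq_mul, mul_pow, mul_assoc, ← Finset.mul_sum, h1, mul_zero]

/-- The euclidean dual of a code has complementary dimension. -/
lemma card_dot_dual (C : Submodule E (Fin n → E)) :
    {x : Fin n → E | ∀ y ∈ C, x ⬝ᵥ y = 0}.ncard * (C : Set (Fin n → E)).ncard
      = Fintype.card E ^ n := by
  let B : LinearMap.BilinForm E (Fin n → E) := dotProductBilin E E
  have hB (x y : Fin n → E) : B x y = x ⬝ᵥ y := rfl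
  have hrefl : B.IsRefl := fun x y h => by rw [hB] at *; rwa [dotProduct_comm]
  have hnd : B.Nondegenerate := by
    refine (LinearMap.IsRefl.nondegenerate_iff_separatingLeft hrefl).2 fun x hx => ?_
    exact dotProduct_eq_zero x hx
  have hset : {x : Fin n → E | ∀ y ∈ C, x ⬝ᵥ y = 0} = (B.orthogonal C : Set (Fin n → E)) := by
    ext x
    simp only [Set.mem_ofPred_eq, SetLike.mem_coe, LinearMap.BilinForm.mem_orthogonal_iff, hB]
    exact forall₂_congr fun y _ => by rw [dotProduct_comm]
  have hc (W : Submodule E (Fin n → E)) :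
      (W : Set (Fin n → E)).ncard = Fintype.card E ^ Module.finrank E W := by
    rw [← Nat.card_coe_set_eq, ← Nat.card_eq_fintype_card]
    exact Module.natCard_eq_pow_finrank (K := E) (V := W)
  have hle := Submodule.finrank_le C
  rw [Module.finrank_fin_fun] at hle
  rw [hset, hc, hc, ← pow_add, LinearMap.BilinForm.finrank_orthogonal hnd,
    Module.finrank_fin_fun, Nat.sub_add_cancel hle]

/-- The coordinatewise Frobenius map is a bijection from the hermitian dual to the euclidean
dual, so the two have the same size. -/
lemma card_hdual (hE : Fintype.card E = q ^ 2) (C : Submodule E (Fin n → E)) :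
    (hdual q (C : Set (Fin n → E))).ncard * (C : Set (Fin n → E)).ncard = q ^ (2 * n) := by
  let φ : (Fin n → E) → (Fin n → E) := fun x i => x i ^ q
  have hφ : Function.Involutive φ := fun x => funext fun i => frob_frob hE (x i)
  have himg : φ '' hdual q (C : Set (Fin n → E)) = {x : Fin n → E | ∀ y ∈ C, x ⬝ᵥ y = 0} := by
    rw [Set.image_eq_preimage_of_inverse hφ.leftInverse hφ.rightInverse]
    ext x
    refine forall₂_congr fun y _ => ?_
    change (∑ i, φ (φ x) i * y i) = 0 ↔ _
    rw [hφ x]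
    rfl
  rw [← Set.ncard_image_of_injective _ hφ.injective, himg, card_dot_dual, hE, pow_mul]

lemma hdual_hdual (hp : p.Prime) (hq : q = p ^ m) (hE : Fintype.card E = q ^ 2)
    (C : Submodule E (Fin n → E)) :
    hdual q (hdual q (C : Set (Fin n → E))) = C := by
  have hq0 : q ≠ 0 := by rw [hq]; exact pow_ne_zero _ hp.ne_zero
  have h1 := card_hdual hE C
  have h2 : (hdual q (hdual q (C : Set (Fin n → E)))).ncard *
      (hdual q (C : Set (Fin n → E))).ncard = q ^ (2 * n) :=
    card_hdual hE (hdualSubmodule hp hq (C : Set (Fin n → E)))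
  have hsub : (C : Set (Fin n → E)) ⊆ hdual q (hdual q (C : Set (Fin n → E))) := by
    intro x hx y hy
    rw [← hform_conj hp hq hE y x, hy x hx, zero_pow hq0]
  have hpos : 0 < (hdual q (C : Set (Fin n → E))).ncard := by
    refine Nat.pos_of_ne_zero fun h => ?_
    rw [h, zero_mul] at h1
    exact pow_ne_zero _ hq0 h1.symm
  refine (Set.eq_of_subset_of_ncard_le hsub (le_of_eq ?_) (Set.toFinite _)).symm
  rw [mul_comm, ← h1] at h2
  exact Nat.eq_of_mul_eq_mul_left hpos h2

end HermitianDual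

/-- exchanging information and gauge qudits in pure subsystem codes: for an
`F_{q²}`-linear code `C` with `D = C ∩ C^{⊥h}`, `D^{⊥h} \ C` nonempty,
`d = wt(D^{⊥h} \ C)`, and purity `wt(D^{⊥h}) = d`, one has
`C^{⊥h} ∩ (C^{⊥h})^{⊥h} = D`, every element of `D^{⊥h} \ C^{⊥h}` has weight `≥ d`,
every nonzero element of `C^{⊥h}` has weight `≥ d`, and (squaring the two square-root
identities) `q^{2n}·|D| = |C|·(|C^{⊥h}|·|D|)` and `|C^{⊥h}|·(|C|·|D|) = q^{2n}·|D|`. -/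
theorem exchange_info_gauge (p m q n d : ℕ) (hp : p.Prime) (hq : q = p ^ m)
    (E : Type) [Field E] [Fintype E] [CharP E p] (hE : Fintype.card E = q ^ 2)
    (C : Submodule E (Fin n → E)) (D : Set (Fin n → E))
    (hD : D = (C : Set (Fin n → E)) ∩ hdual q (C : Set (Fin n → E)))
    (hne : (hdual q D \ (C : Set (Fin n → E))).Nonempty)
    (hd : d = sInf (hwt '' (hdual q D \ (C : Set (Fin n → E)))))
    (hpure : sInf (hwt '' (hdual q D \ {0})) = d) :
    hdual q (C : Set (Fin n → E)) ∩ hdual q (hdual q (C : Set (Fin n → E))) = D ∧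
    (∀ v ∈ hdual q D \ hdual q (C : Set (Fin n → E)), d ≤ hwt v) ∧
    (∀ v ∈ hdual q (C : Set (Fin n → E)), v ≠ 0 → d ≤ hwt v) ∧
    q ^ (2 * n) * D.ncard =
      (C : Set (Fin n → E)).ncard * ((hdual q (C : Set (Fin n → E))).ncard * D.ncard) ∧
    (hdual q (C : Set (Fin n → E))).ncard * ((C : Set (Fin n → E)).ncard * D.ncard) =
      q ^ (2 * n) * D.ncard := by
  have hcard := card_hdual hE C
  have hmin : ∀ v ∈ hdual q D, v ≠ 0 → d ≤ hwt v := fun v hv hv0 =>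
    hpure ▸ Nat.sInf_le ⟨v, ⟨hv, hv0⟩, rfl⟩
  refine ⟨?_, ?_, ?_, ?_, ?_⟩
  · rw [hdual_hdual hp hq hE, hD, Set.inter_comm]
  · rintro v ⟨hv, hvC⟩
    refine hmin v hv ?_
    rintro rfl
    exact hvC (hdualSubmodule hp hq (C : Set (Fin n → E))).zero_mem
  · intro v hv hv0
    exact hmin v (hdual_anti q (hD ▸ Set.inter_subset_left) hv) hv0
  · rw [← hcard]; ring
  · rw [← hcard]; ring
end
end

section
/- (From subsystem codes to stabilizer codes.) Let F_q have characteristic p, and let C ⊆ F_q^{2n} be an F_p-linear additive code with D = C ∩ C^{⊥s}, with D^{⊥s} \ C nonempty and d = swt(D^{⊥s} \ C). Then there exists an F_p-linear additive code Y ⊆ F_q^{2n} with Y ⊆ Y^{⊥s}, |Y| = √(|C||D|), every element of Y^{⊥s} \ Y of symplectic weight at least d, and swt(Y) = swt(C). (In subsystem code language: an ((n,K,R,d))_q Clifford subsystem code exactly pure to d' implies the existence of an ((n,K,≥d))_q stabilizer code exactly pure to d'.) -/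
/-!
The form restricted to `C` is alternating with radical `D`. A minimum-weight word `x` of `C` spans
an isotropic subspace, which extends to a maximal isotropic subspace `Y` of `C`. Maximality means
`Y = C ∩ Y^{⊥s}`. Hence `D ⊆ Y`, and the dimension formula
`dim Y + dim (C ∩ Y^{⊥s}) = dim C + dim (Y ∩ D)` gives `2 dim Y = dim C + dim D`, that is,
`|Y|² = |C||D|`. A word of `Y^{⊥s}` outside `Y` lies outside `C`, and it lies in `D^{⊥s}` because
`D ⊆ Y`, so its weight is at least `d`. Finally `x ∈ Y ⊆ C` forces equal minimum weights.
Nondegeneracy of the trace-symplectic form plays no role.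
-/


open scoped Pointwise

noncomputable section

/-- For an alternating form, every vector lies in a subspace equal to its own orthogonal
complement: a maximal isotropic subspace containing the vector. -/
lemma exists_self_orthogonal_mem {K V : Type*} [Field K] [AddCommGroup V] [Module K V]
    [FiniteDimensional K V] (B : LinearMap.BilinForm K V) (hB : B.IsAlt) (x : V) :
    ∃ Y : Submodule K V, x ∈ Y ∧ B.orthogonal Y = Y := by
  obtain ⟨Y, ⟨hx, hY⟩, hmax⟩ := (wellFounded_gt (α := Submodule K V)).has_min
    {Y | x ∈ Y ∧ ∀ a ∈ Y, ∀ b ∈ Y, B a b = 0} ⟨K ∙ x, Submodule.mem_span_singleton_self x, by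
      intro a ha b hb
      obtain ⟨r, rfl⟩ := Submodule.mem_span_singleton.1 ha
      obtain ⟨s, rfl⟩ := Submodule.mem_span_singleton.1 hb
      simp [hB x]⟩
  refine ⟨Y, hx, le_antisymm (fun v hv => ?_) (fun v hv a ha => hY a ha v hv)⟩
  by_contra hvY
  have hv' : ∀ a ∈ Y, B a v = 0 := hv
  have hv2 : ∀ a ∈ Y, B v a = 0 := fun a ha => hB.isRefl a v (hv' a ha)
  -- `Y + ⟨v⟩` would be a strictly larger isotropic subspace.
  refine hmax (Y ⊔ K ∙ v) ⟨Submodule.mem_sup_left hx, ?_⟩ ?_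
  · intro a ha b hb
    obtain ⟨a, ha', s, hs, rfl⟩ := Submodule.mem_sup.1 ha
    obtain ⟨b, hb', t, ht, rfl⟩ := Submodule.mem_sup.1 hb
    obtain ⟨s, rfl⟩ := Submodule.mem_span_singleton.1 hs
    obtain ⟨t, rfl⟩ := Submodule.mem_span_singleton.1 ht
    simp [hY a ha' b hb', hv' a ha', hv2 b hb', hB v]
  · exact lt_of_le_of_ne le_sup_left fun h => hvY
      (h ▸ Submodule.mem_sup_right (Submodule.mem_span_singleton_self v))

/-- The trace-symplectic form as a bilinear form. -/
def sbilin (p : ℕ) [Fact p.Prime] (F : Type) [Field F] [Algebra (ZMod p) F] (n : ℕ) :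
    LinearMap.BilinForm (ZMod p) (Pairs F n) :=
  LinearMap.mk₂ (ZMod p) (sform p)
    (fun u u' v => by
      simp only [sform, ← map_add, ← Finset.sum_add_distrib]
      congr 1; refine Finset.sum_congr rfl fun i _ => ?_
      simp only [Prod.fst_add, Prod.snd_add, Pi.add_apply]; ring)
    (fun c u v => by
      simp only [sform, ← map_smul, Finset.smul_sum]
      congr 1; refine Finset.sum_congr rfl fun i _ => ?_
      simp only [Prod.smul_fst, Prod.smul_snd, Pi.smul_apply, smul_sub, mul_smul_comm,
        smul_mul_assoc])
    (fun u v v' => by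
      simp only [sform, ← map_add, ← Finset.sum_add_distrib]
      congr 1; refine Finset.sum_congr rfl fun i _ => ?_
      simp only [Prod.fst_add, Prod.snd_add, Pi.add_apply]; ring)
    (fun c u v => by
      simp only [sform, ← map_smul, Finset.smul_sum]
      congr 1; refine Finset.sum_congr rfl fun i _ => ?_
      simp only [Prod.smul_fst, Prod.smul_snd, Pi.smul_apply, smul_sub, mul_smul_comm,
        smul_mul_assoc])

lemma sbilin_isAlt (p : ℕ) [Fact p.Prime] (F : Type) [Field F] [Algebra (ZMod p) F] (n : ℕ) :
    (sbilin p F n).IsAlt := by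
  intro u
  simp [sbilin, sform]

/-- from subsystem codes to stabilizer codes: if `C ⊆ F_q^{2n}` is an
additive code with `D = C ∩ C^{⊥s}`, `D^{⊥s} \ C` nonempty and `d = swt(D^{⊥s} \ C)`, then
there is a self-orthogonal additive code `Y ⊆ Y^{⊥s}` with `|Y| = √(|C||D|)` (stated as
`|Y|² = |C|·|D|`), every element of `Y^{⊥s} \ Y` of symplectic weight `≥ d`, and
`swt(Y) = swt(C)` (minimum nonzero weights). -/
theorem subsystem_to_stabilizer (p n d : ℕ) (hp : p.Prime) (F : Type) [Field F] [Fintype F]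
    [CharP F p] [Algebra (ZMod p) F]
    (C : Submodule (ZMod p) (Pairs F n)) (D : Set (Pairs F n))
    (hD : D = (C : Set (Pairs F n)) ∩ sdual p (C : Set (Pairs F n)))
    (hne : (sdual p D \ (C : Set (Pairs F n))).Nonempty)
    (hd : d = sInf (swt '' (sdual p D \ (C : Set (Pairs F n))))) :
    ∃ Y : Submodule (ZMod p) (Pairs F n),
      (Y : Set (Pairs F n)) ⊆ sdual p (Y : Set (Pairs F n)) ∧
      (Y : Set (Pairs F n)).ncard ^ 2 = (C : Set (Pairs F n)).ncard * D.ncard ∧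
      (∀ v ∈ sdual p (Y : Set (Pairs F n)) \ (Y : Set (Pairs F n)), d ≤ swt v) ∧
      sInf (swt '' ((Y : Set (Pairs F n)) \ {0})) =
        sInf (swt '' ((C : Set (Pairs F n)) \ {0})) := by
  have : Fact p.Prime := ⟨hp⟩
  let B : LinearMap.BilinForm (ZMod p) C := (sbilin p F n).restrict C
  have hBa : ∀ a b : C, B a b = sform p a.1 b.1 := fun a b => rfl
  have hB : B.IsAlt := fun a => sbilin_isAlt p F n a.1
  have hsymm : ∀ u v : Pairs F n, sform p u v = 0 → sform p v u = 0 :=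
    fun u v h => (sbilin_isAlt p F n).isRefl u v h
  -- A word attaining the minimum weight of `C`; the zero word if `C = 0`.
  obtain ⟨x, hx⟩ : ∃ x : C, ((C : Set (Pairs F n)) \ {0}).Nonempty →
      x.1 ≠ 0 ∧ swt x.1 = sInf (swt '' ((C : Set (Pairs F n)) \ {0})) := by
    by_cases h : ((C : Set (Pairs F n)) \ {0}).Nonempty
    · obtain ⟨x, hx, hxe⟩ := Nat.sInf_mem (h.image swt)
      exact ⟨⟨x, hx.1⟩, fun _ => ⟨hx.2, hxe⟩⟩
    · exact ⟨0, fun h' => absurd h' h⟩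
  obtain ⟨Y, hxY, hYo⟩ := exists_self_orthogonal_mem B hB x
  have hmem : ∀ v (hv : v ∈ C), (∀ w ∈ Y, sform p v w.1 = 0) → (⟨v, hv⟩ : C) ∈ Y := by
    intro v hv h
    rw [← hYo]
    exact fun w hw => hsymm _ _ (h w hw)
  have hiso : ∀ v ∈ Y, ∀ w ∈ Y, sform p v.1 w.1 = 0 := by
    intro v hv w hw
    rw [← hYo] at hw
    exact hw v hv
  have hDrad : D = ((B.orthogonal ⊤).map C.subtype : Submodule (ZMod p) (Pairs F n)) := by
    rw [hD]
    ext v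
    constructor
    · rintro ⟨hv, hv'⟩
      exact ⟨⟨v, hv⟩, fun w _ => hsymm _ _ (hv' w.1 w.2), rfl⟩
    · rintro ⟨w, hw, rfl⟩
      exact ⟨w.2, fun u hu => hsymm _ _ (hw ⟨u, hu⟩ trivial)⟩
  have hrad : B.orthogonal ⊤ ≤ Y := by
    rw [← hYo]
    exact LinearMap.BilinForm.orthogonal_le le_top
  have hYC : ((Y.map C.subtype : Submodule (ZMod p) (Pairs F n)) : Set (Pairs F n)) ⊆ C :=
    fun v hv => Submodule.map_subtype_le C Y hv
  have hcard : ∀ S : Submodule (ZMod p) (Pairs F n),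
      (S : Set (Pairs F n)).ncard = p ^ Module.finrank (ZMod p) S := by
    intro S
    rw [← Nat.card_coe_set_eq]
    have := Module.natCard_eq_pow_finrank (K := ZMod p) (V := S)
    rwa [Nat.card_zmod] at this
  refine ⟨Y.map C.subtype, ?_, ?_, ?_, ?_⟩
  · rintro _ ⟨v, hv, rfl⟩ _ ⟨w, hw, rfl⟩
    exact hiso v hv w hw
  · rw [hDrad, hcard, hcard, hcard, ← pow_mul, ← pow_add,
      Submodule.finrank_map_subtype_eq, Submodule.finrank_map_subtype_eq]
    have h := LinearMap.BilinForm.finrank_add_finrank_orthogonal hB.isRefl Y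
    rw [hYo, inf_eq_right.2 hrad] at h
    congr 1
    omega
  · rintro v ⟨hv, hvY⟩
    rw [hd]
    refine Nat.sInf_le ⟨v, ⟨fun w hw => ?_, fun hvC => hvY ?_⟩, rfl⟩
    · rw [hDrad] at hw
      exact hv w (Submodule.map_mono hrad hw)
    · exact ⟨⟨v, hvC⟩, hmem v hvC fun w hw => hv w.1 ⟨w, hw, rfl⟩, rfl⟩
  · by_cases h : ((C : Set (Pairs F n)) \ {0}).Nonempty
    · obtain ⟨hx0, hxw⟩ := hx h
      have hxm : x.1 ∈ ((Y.map C.subtype : Submodule (ZMod p) (Pairs F n)) : Set _) \ {0} :=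
        ⟨⟨x, hxY, rfl⟩, hx0⟩
      refine le_antisymm (hxw ▸ Nat.sInf_le ⟨x.1, hxm, rfl⟩) ?_
      obtain ⟨y, hy, hye⟩ := Nat.sInf_mem (Set.Nonempty.image swt ⟨x.1, hxm⟩)
      rw [← hye]
      exact Nat.sInf_le ⟨y, ⟨hYC hy.1, hy.2⟩, rfl⟩
    · rw [Set.not_nonempty_iff_eq_empty] at h
      -- Here `C = 0`, and both sides are the infimum of the empty set.
      rw [h, Set.subset_eq_empty (Set.sdiff_subset_sdiff_left hYC) h]
end
end
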